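/- arXiv:1604.07976 — 2 statements merged into one kernel-verified Lean document; each statement's English description precedes it below -/
import Mathlib

section
/- For every finite connected simple graph G = (V,E), the extension complexity of the spanning tree polytope of G is O(|V|·|E|). Precisely, there exists a universal constant C > 0 such that for every finite connected simple graph G = (V,E) one has xc(STP(G)) ≤ C·|V|·|E|. -/
/-- `P ⊆ ℝ^ι` admits an extended formulation with `m` inequalities: a linear system
`A x + B y ≤ b`, `C x + D y = c` (with `k` extra variables `y` and `p` equalities)
whose projection to the `x`-variables is exactly `P`. -/
def IsExtFormulation {ι : Type} [Fintype ι] (P : Set (ι → ℝ)) (m : ℕ) : Prop :=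
  ∃ (k p : ℕ) (A : Matrix (Fin m) ι ℝ) (B : Matrix (Fin m) (Fin k) ℝ) (b : Fin m → ℝ)
    (C : Matrix (Fin p) ι ℝ) (D : Matrix (Fin p) (Fin k) ℝ) (c : Fin p → ℝ),
    P = {x : ι → ℝ | ∃ y : Fin k → ℝ,
      (∀ i, A.mulVec x i + B.mulVec y i ≤ b i) ∧
      (∀ j, C.mulVec x j + D.mulVec y j = c j)}

/-- The extension complexity of `P`: the minimum number of inequalities
in an extended formulation of `P`. -/
noncomputable def xc {ι : Type} [Fintype ι] (P : Set (ι → ℝ)) : ℕ :=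
  sInf {m | IsExtFormulation P m}

/-- `T` is the edge set of a spanning tree of `G`: `T` consists of edges of `G` and
the graph on `V` with edge set `T` is a tree (connected and acyclic). -/
def IsSpanningTreeEdgeSet {V : Type} (G : SimpleGraph V) (T : Set (Sym2 V)) : Prop :=
  T ⊆ G.edgeSet ∧ (SimpleGraph.fromEdgeSet T).IsTree

/-- The spanning tree polytope of `G`: the convex hull in `ℝ^E` of the characteristic
vectors of edge sets of spanning trees of `G`. -/
noncomputable def stp {V : Type} (G : SimpleGraph V) : Set (↥G.edgeSet → ℝ) :=
  convexHull ℝ {x | ∃ T : Set (Sym2 V), IsSpanningTreeEdgeSet G T ∧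
    x = fun e : ↥G.edgeSet => T.indicator 1 (e : Sym2 V)}

open Finset SimpleGraph

/-- A set cut out of `ℝ^ι` by a linear system in standard form, with nonnegative extra variables
indexed by `κ`, has an extended formulation with one inequality for each extra variable. -/
theorem isExtFormulation_of_standardForm {ι κ W : Type} [Fintype ι] [Fintype κ]
    [AddCommGroup W] [Module ℝ W] [FiniteDimensional ℝ W] {P : Set (ι → ℝ)}
    (C : (ι → ℝ) →ₗ[ℝ] W) (D : (κ → ℝ) →ₗ[ℝ] W) (c : W)
    (hP : P = {x | ∃ y : κ → ℝ, 0 ≤ y ∧ C x + D y = c}) :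
    IsExtFormulation P (Fintype.card κ) := by
  classical
  let e := Fintype.equivFin κ
  let φ := (Module.finBasis ℝ W).equivFun
  let r : (Fin (Fintype.card κ) → ℝ) ≃ₗ[ℝ] (κ → ℝ) := LinearEquiv.funCongrLeft ℝ ℝ e
  refine ⟨Fintype.card κ, Module.finrank ℝ W, 0, -1, 0, LinearMap.toMatrix' (φ.toLinearMap ∘ₗ C),
    LinearMap.toMatrix' (φ.toLinearMap ∘ₗ D ∘ₗ r.toLinearMap), φ c, ?_⟩
  have key (x : ι → ℝ) (y : Fin (Fintype.card κ) → ℝ) :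
      (∀ j, (LinearMap.toMatrix' (φ.toLinearMap ∘ₗ C)).mulVec x j +
        (LinearMap.toMatrix' (φ.toLinearMap ∘ₗ D ∘ₗ r.toLinearMap)).mulVec y j = φ c j) ↔
        C x + D (r y) = c := by
    simp only [LinearMap.toMatrix'_mulVec, LinearMap.comp_apply, LinearEquiv.coe_coe]
    rw [← φ.injective.eq_iff, map_add]
    exact funext_iff.symm
  subst hP
  ext x
  simp only [Set.mem_ofPred_eq, key]
  constructor
  · rintro ⟨y, hy, h⟩
    refine ⟨r.symm y, fun i ↦ ?_, by simpa using h⟩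
    have := hy (e.symm i)
    simpa [r, LinearEquiv.funCongrLeft, Matrix.neg_mulVec, LinearMap.funLeft] using this
  · rintro ⟨y, hy, h⟩
    refine ⟨r y, fun i ↦ ?_, h⟩
    simpa [r, Matrix.neg_mulVec, LinearMap.funLeft] using hy (e i)

theorem xc_le_of_isExtFormulation {ι : Type} [Fintype ι] {P : Set (ι → ℝ)} {m : ℕ}
    (h : IsExtFormulation P m) : xc P ≤ m :=
  Nat.sInf_le h

/-- In a tree, every vertex `v` other than `k` has a unique neighbor closer to `k`. -/
theorem SimpleGraph.IsTree.existsUnique_adj_dist {V : Type*} {T : SimpleGraph V} (hT : T.IsTree)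
    {k v : V}
    (hv : v ≠ k) : ∃! w, T.Adj v w ∧ T.dist v k = T.dist w k + 1 := by
  obtain ⟨p, hp, hl⟩ := hT.connected.exists_path_of_dist v k
  have hnil : ¬ p.Nil := Walk.not_nil_of_ne hv
  refine ⟨p.snd, ⟨p.adj_snd hnil, ?_⟩, ?_⟩
  · have h₁ := p.length_tail_add_one hnil
    have h₂ := T.dist_le p.tail
    have h₃ := hT.dist_eq_dist_add_one_of_adj k (p.adj_snd hnil)
    rw [T.dist_comm (u := k), T.dist_comm (u := k)] at h₃
    omega
  · rintro w ⟨hw, hd⟩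
    obtain ⟨q, hq, hql⟩ := hT.connected.exists_path_of_dist w k
    have hq' : (Walk.cons hw q).IsPath := by
      apply Walk.isPath_of_length_eq_dist
      rw [Walk.length_cons, hql, hd]
    rw [(hT.existsUnique_path v k).unique hp hq', Walk.snd_cons]

/-- Kruskal's algorithm on the edges in `A`, recording by `ρ` a representative of each component of
the forest `F`, together with the comparison of the weight of `F` to any `x` that satisfies the
rank inequalities. -/
theorem exists_forest_sum_le {V : Type} [Fintype V] [DecidableEq V] {G : SimpleGraph V}
    (x w : G.edgeSet → ℝ)
    (hx : ∀ (B : Finset G.edgeSet) (ρ : V → V),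
      (∀ d : G.Dart, (⟨d.edge, d.edge_mem⟩ : G.edgeSet) ∈ B → ρ d.fst = ρ d.snd) →
      ∑ e ∈ B, x e ≤ #{v | ρ v ≠ v}) (A : Finset G.edgeSet) :
    ∃ (F : Finset G.edgeSet) (ρ : V → V), F ⊆ A ∧
      (∀ d : G.Dart, (⟨d.edge, d.edge_mem⟩ : G.edgeSet) ∈ A → ρ d.fst = ρ d.snd) ∧
      (∀ a b, ρ a = ρ b → (fromEdgeSet ((↑) '' (F : Set G.edgeSet) : Set (Sym2 V))).Reachable a b) ∧
      (∀ a, ρ (ρ a) = ρ a) ∧ #F = #{v | ρ v ≠ v} ∧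
      ∀ M, (∀ e ∈ A, w e ≤ M) → ∑ e ∈ A, (M - w e) * x e ≤ ∑ e ∈ F, (M - w e) := by
  classical
  induction A using Finset.induction_on_max_value w with
  | empty => exact ⟨∅, id, by simp⟩
  | insert e A heA hmax ih =>
    obtain ⟨F, ρ, hFA, hA, hF, hρ, hcard, hw⟩ := ih
    have hstep (F' : Finset G.edgeSet) (ρ' : V → V)
        (hA' : ∀ d : G.Dart, (⟨d.edge, d.edge_mem⟩ : G.edgeSet) ∈ insert e A →
          ρ' d.fst = ρ' d.snd) (hcard' : #F' = #{v | ρ' v ≠ v})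
        (hF' : ∑ i ∈ F', (w e - w i) = ∑ i ∈ F, (w e - w i)) (M : ℝ)
        (hM : ∀ i ∈ insert e A, w i ≤ M) :
        ∑ i ∈ insert e A, (M - w i) * x i ≤ ∑ i ∈ F', (M - w i) := by
      calc
        _ = (M - w e) * ∑ i ∈ insert e A, x i + ∑ i ∈ A, (w e - w i) * x i := by
          have : ∑ i ∈ A, (w e - w i) * x i = ∑ i ∈ insert e A, (w e - w i) * x i := by
            simp [sum_insert heA]
          rw [this, mul_sum, ← sum_add_distrib]
          exact sum_congr rfl fun i _ ↦ by ring
        _ ≤ (M - w e) * #F' + ∑ i ∈ F', (w e - w i) := by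
          rw [hcard', hF']
          gcongr
          · exact sub_nonneg.2 (hM e (mem_insert_self e A))
          · exact hx _ _ hA'
          · exact hw _ hmax
        _ = _ := by
          rw [mul_comm, ← nsmul_eq_mul, ← sum_const, ← sum_add_distrib]
          exact sum_congr rfl fun i _ ↦ by ring
    obtain ⟨⟨u, v⟩, huv⟩ := e
    set e : G.edgeSet := ⟨s(u, v), huv⟩ with he
    have hedge (d : G.Dart) (hd : (⟨d.edge, d.edge_mem⟩ : G.edgeSet) = e) :
        d.fst = u ∧ d.snd = v ∨ d.fst = v ∧ d.snd = u := by
      have := Subtype.ext_iff.1 hd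
      exact dart_edge_eq_mk'_iff'.1 this
    by_cases huv' : ρ u = ρ v
    · have hA' (d : G.Dart) (hd : (⟨d.edge, d.edge_mem⟩ : G.edgeSet) ∈ insert e A) :
          ρ d.fst = ρ d.snd := by
        rcases mem_insert.1 hd with h | h
        · rcases hedge d h with ⟨h₁, h₂⟩ | ⟨h₁, h₂⟩ <;> rw [h₁, h₂, huv']
        · exact hA d h
      exact ⟨F, ρ, hFA.trans (subset_insert _ _), hA', hF, hρ, hcard, hstep F ρ hA' hcard rfl⟩
    · let ρ' : V → V := fun a ↦ if ρ a = ρ v then ρ u else ρ a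
      have hA' (d : G.Dart) (hd : (⟨d.edge, d.edge_mem⟩ : G.edgeSet) ∈ insert e A) :
          ρ' d.fst = ρ' d.snd := by
        rcases mem_insert.1 hd with h | h
        · rcases hedge d h with ⟨h₁, h₂⟩ | ⟨h₁, h₂⟩ <;> simp [h₁, h₂, ρ']
        · simp [ρ', hA d h]
      have heF : e ∉ F := fun h ↦ heA (hFA h)
      have hcard' : #(insert e F) = #{a | ρ' a ≠ a} := by
        have : ({a | ρ' a ≠ a} : Finset V) = insert (ρ v) ({a | ρ a ≠ a} : Finset V) := by
          ext a
          simp only [mem_filter, mem_univ, true_and, mem_insert, ρ']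
          grind
        rw [this, card_insert_of_notMem heF, card_insert_of_notMem (by simp [hρ]), hcard]
      have hle : fromEdgeSet ((↑) '' (F : Set G.edgeSet) : Set (Sym2 V)) ≤
          fromEdgeSet ((↑) '' ((insert e F : Finset G.edgeSet) : Set G.edgeSet) : Set (Sym2 V)) :=
        fromEdgeSet_mono (Set.image_mono (by simp))
      have hadj : (fromEdgeSet ((↑) '' ((insert e F : Finset G.edgeSet) : Set G.edgeSet) :
          Set (Sym2 V))).Adj u v := by
        rw [fromEdgeSet_adj]
        exact ⟨⟨e, by simp, rfl⟩, G.ne_of_adj huv⟩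
      refine ⟨insert e F, ρ', insert_subset_insert e hFA, hA', fun a b hab ↦ ?_, fun a ↦ ?_, hcard',
        hstep _ ρ' hA' hcard' (by simp [sum_insert heF])⟩
      · have hF' {a b : V} (h : ρ a = ρ b) := (hF a b h).mono hle
        simp only [ρ'] at hab
        split_ifs at hab with h₁ h₂ h₂
        · exact hF' (h₁.trans h₂.symm)
        · exact (hF' h₁).trans (hadj.symm.reachable.trans (hF' hab))
        · exact (hF' hab).trans (hadj.reachable.trans (hF' h₂.symm))
        · exact hF' hab
      · simp only [ρ']
        grind

section Martin

variable {V : Type} [Fintype V] [DecidableEq V] (G : SimpleGraph V) [DecidableRel G.Adj]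

/-- Martin's linear system: for every root `k`, the weights `x` of the edges are split among their
two orientations by `z k`, in such a way that every vertex other than `k` has out-degree one. -/
structure IsRootedSplitting (x : G.edgeSet → ℝ) (z : V → G.Dart → ℝ) : Prop where
  nonneg (k d) : 0 ≤ z k d
  sum_edge (k) (e : G.edgeSet) : ∑ d with d.edge = ↑e, z k d = x e
  sum_fst (k v) : ∑ d with d.fst = v, z k d = if v = k then 0 else 1
  sum_eq : ∑ e, x e = Fintype.card V - 1

theorem isExtFormulation_isRootedSplitting :
    IsExtFormulation {x | ∃ z, IsRootedSplitting G x z} (Fintype.card (V × G.Dart)) := by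
  let C : (G.edgeSet → ℝ) →ₗ[ℝ] (V → G.edgeSet → ℝ) × (V → V → ℝ) × ℝ :=
    { toFun := fun x ↦ (fun _ e ↦ -x e, 0, ∑ e, x e)
      map_add' := fun x y ↦ by
        ext <;> simp [sum_add_distrib]
        ring
      map_smul' := fun a x ↦ by ext <;> simp [mul_sum] }
  let D : (V × G.Dart → ℝ) →ₗ[ℝ] (V → G.edgeSet → ℝ) × (V → V → ℝ) × ℝ :=
    { toFun := fun z ↦ (fun k e ↦ ∑ d with d.edge = ↑e, z (k, d),
        fun k v ↦ ∑ d with d.fst = v, z (k, d), 0)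
      map_add' := fun x y ↦ by ext <;> simp [sum_add_distrib]
      map_smul' := fun a x ↦ by ext <;> simp [mul_sum] }
  refine isExtFormulation_of_standardForm C D
    (0, fun k v ↦ if v = k then 0 else 1, (Fintype.card V : ℝ) - 1) ?_
  have key (x : G.edgeSet → ℝ) (z : V × G.Dart → ℝ) :
      IsRootedSplitting G x (fun k d ↦ z (k, d)) ↔
        0 ≤ z ∧ C x + D z =
          (0, fun k v ↦ if v = k then 0 else 1, (Fintype.card V : ℝ) - 1) := by
    simp only [C, D, LinearMap.coe_mk, AddHom.coe_mk, Prod.mk_add_mk, Prod.mk.injEq, zero_add,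
      add_zero, funext_iff, Pi.add_apply, Pi.zero_apply, neg_add_eq_zero, Pi.le_def, Prod.forall]
    exact ⟨fun h ↦ ⟨h.nonneg, fun k e ↦ (h.sum_edge k e).symm, h.sum_fst, h.sum_eq⟩,
      fun ⟨h₁, h₂, h₃, h₄⟩ ↦ ⟨h₁, fun k e ↦ (h₂ k e).symm, h₃, h₄⟩⟩
  ext x
  simp only [Set.mem_ofPred_eq, ← key]
  exact ⟨fun ⟨z, hz⟩ ↦ ⟨fun p ↦ z p.1 p.2, hz⟩, fun ⟨z, hz⟩ ↦ ⟨_, hz⟩⟩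

theorem convex_isRootedSplitting : Convex ℝ {x | ∃ z, IsRootedSplitting G x z} := by
  rintro x ⟨z, hz⟩ x' ⟨z', hz'⟩ a b ha hb hab
  refine ⟨a • z + b • z', fun k d ↦ ?_, fun k e ↦ ?_, fun k v ↦ ?_, ?_⟩
  · have := hz.nonneg k d
    have := hz'.nonneg k d
    simp only [Pi.add_apply, Pi.smul_apply, smul_eq_mul]
    positivity
  · simp [sum_add_distrib, ← mul_sum, hz.sum_edge, hz'.sum_edge]
  · simp only [Pi.add_apply, Pi.smul_apply, smul_eq_mul, sum_add_distrib, ← mul_sum, hz.sum_fst,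
      hz'.sum_fst, ← add_mul, hab, one_mul]
  · simp only [Pi.add_apply, Pi.smul_apply, smul_eq_mul, sum_add_distrib, ← mul_sum, hz.sum_eq,
      hz'.sum_eq, ← add_mul, hab, one_mul]

variable {G}

/-- Characteristic vectors of spanning trees solve Martin's system: orient the tree towards
each root. -/
theorem exists_isRootedSplitting_of_isSpanningTree {T : Set (Sym2 V)}
    (hT : IsSpanningTreeEdgeSet G T) :
    ∃ z, IsRootedSplitting G (fun e : G.edgeSet ↦ T.indicator 1 (e : Sym2 V)) z := by
  classical
  obtain ⟨hTG, hT⟩ := hT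
  let H := SimpleGraph.fromEdgeSet T
  have hadj {u v : V} (h : G.Adj u v) : H.Adj u v ↔ s(u, v) ∈ T := by
    simp [H, h.ne]
  refine ⟨fun k d ↦ if H.Adj d.fst d.snd ∧ H.dist d.fst k = H.dist d.snd k + 1 then 1 else 0,
    fun k d ↦ by positivity, ?_, ?_, ?_⟩
  · rintro k ⟨⟨u, v⟩, huv : G.Adj u v⟩
    have hfib := Dart.edge_fiber (⟨(u, v), huv⟩ : G.Dart)
    change ({d : G.Dart | d.edge = s(u, v)} : Finset _) = _ at hfib
    change ∑ d : G.Dart with d.edge = s(u, v), _ = T.indicator 1 s(u, v)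
    rw [hfib, sum_pair (Dart.symm_ne _).symm]
    simp only [Dart.symm_mk, Prod.fst_swap, Prod.snd_swap, H.adj_comm v u, hadj huv]
    by_cases h : s(u, v) ∈ T
    · have := hT.dist_eq_dist_add_one_of_adj k ((hadj huv).2 h)
      rw [dist_comm (u := k), dist_comm (u := k)] at this
      simp only [h, true_and, Set.indicator_of_mem, Pi.one_apply]
      rcases this with h | h
      · rw [if_pos h, if_neg (by simp only [H]; omega), add_zero]
      · rw [if_pos h, if_neg (by simp only [H]; omega), zero_add]
    · simp [h]
  · intro k v
    split_ifs with h
    · subst h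
      refine sum_eq_zero fun d hd ↦ ?_
      rw [mem_filter] at hd
      simp [hd.2]
    · obtain ⟨w, ⟨hw, hd⟩, huniq⟩ := hT.existsUnique_adj_dist h
      have hG : G.Adj v w := hTG ((SimpleGraph.fromEdgeSet_adj _).1 hw).1
      rw [sum_eq_single ⟨(v, w), hG⟩]
      · exact if_pos ⟨hw, hd⟩
      · rintro ⟨⟨a, b⟩, hab⟩ ha hne
        obtain rfl : a = v := by simpa using ha
        refine if_neg fun hb ↦ hne ?_
        obtain rfl := huniq b hb
        rfl
      · simp
  · have hc := (isTree_iff_connected_and_card.1 hT).2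
    have hE : (SimpleGraph.fromEdgeSet T).edgeSet = T := by
      rw [edgeSet_fromEdgeSet, sdiff_eq_left, Set.disjoint_left]
      exact fun e he ↦ G.not_isDiag_of_mem_edgeSet (hTG he)
    rw [hE, Nat.card_eq_fintype_card (α := V)] at hc
    rw [← hc]
    have hcard : Nat.card T = #{e : G.edgeSet | (e : Sym2 V) ∈ T} := by
      rw [← Fintype.card_subtype, ← Nat.card_eq_fintype_card]
      exact (Nat.card_congr (Equiv.subtypeSubtypeEquivSubtype fun h ↦ hTG h)).symm
    simp only [hcard, Set.indicator_apply, Pi.one_apply, sum_boole]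
    push_cast
    ring

/-- The rank inequality: if `ρ` is constant along the edges in `B`, then the total weight of `B` is
bounded by the number of vertices moved by `ρ`. -/
theorem IsRootedSplitting.sum_le {x : G.edgeSet → ℝ} {z : V → G.Dart → ℝ}
    (h : IsRootedSplitting G x z) (B : Finset G.edgeSet) (ρ : V → V)
    (hρ : ∀ d : G.Dart, (⟨d.edge, d.edge_mem⟩ : G.edgeSet) ∈ B → ρ d.fst = ρ d.snd) :
    ∑ e ∈ B, x e ≤ #{v | ρ v ≠ v} := by
  let edge (d : G.Dart) : G.edgeSet := ⟨d.edge, d.edge_mem⟩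
  calc
    ∑ e ∈ B, x e = ∑ e ∈ B, ∑ d with edge d = e, z (ρ d.fst) d := by
        refine sum_congr rfl fun e he ↦ ?_
        obtain ⟨⟨u, v⟩, huv⟩ := e
        rw [← h.sum_edge (ρ u)]
        refine sum_congr (by ext; simp [edge, Subtype.ext_iff]) fun d hd ↦ ?_
        have hd : d.edge = s(u, v) := congrArg Subtype.val (mem_filter.1 hd).2
        have hd' := (dart_edge_eq_iff d ⟨(u, v), huv⟩).1 hd
        rcases hd' with rfl | rfl
        · rfl
        · have := hρ ⟨(u, v), huv⟩ he
          simp_all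
    _ = ∑ d with edge d ∈ B, z (ρ d.fst) d := by
        rw [sum_fiberwise_eq_sum_filter]
    _ ≤ ∑ d, z (ρ d.fst) d :=
        sum_le_sum_of_subset_of_nonneg (filter_subset _ _) fun d _ _ ↦ h.nonneg _ _
    _ = ∑ v, ∑ d with d.fst = v, z (ρ d.fst) d := (sum_fiberwise _ _ _).symm
    _ = ∑ v, ∑ d with d.fst = v, z (ρ v) d := by
        refine sum_congr rfl fun v _ ↦ sum_congr rfl fun d hd ↦ ?_
        rw [(mem_filter.1 hd).2]
    _ = #{v | ρ v ≠ v} := by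
        simp_rw [h.sum_fst, card_filter, eq_comm (b := ρ _), Nat.cast_sum]
        refine sum_congr rfl fun v _ ↦ ?_
        by_cases hv : ρ v = v <;> simp [hv]

/-- Every linear functional is minimized over the solutions of Martin's system by a spanning
tree. -/
theorem IsRootedSplitting.exists_isSpanningTree_le (hG : G.Connected) {x : G.edgeSet → ℝ}
    {z : V → G.Dart → ℝ} (h : IsRootedSplitting G x z) (w : G.edgeSet → ℝ) :
    ∃ T, IsSpanningTreeEdgeSet G T ∧
      ∑ e : G.edgeSet, w e * T.indicator 1 (e : Sym2 V) ≤ ∑ e, w e * x e := by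
  classical
  obtain ⟨F, ρ, -, hE, hF, hρ, hcard, hw⟩ := exists_forest_sum_le x w h.sum_le univ
  have hconst (a b : V) : ρ a = ρ b := by
    obtain ⟨p⟩ := hG.preconnected a b
    induction p with
    | nil => rfl
    | cons hadj _ ih => exact (hE ⟨(_, _), hadj⟩ (mem_univ _)).trans ih
  obtain ⟨r⟩ := hG.nonempty
  have hcardF : #F + 1 = Fintype.card V := by
    have : ({v | ρ v ≠ v} : Finset V) = {ρ r}ᶜ := by
      ext v
      simp [hconst v r, eq_comm]
    rw [hcard, this, card_compl, card_singleton, Nat.sub_add_cancel]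
    exact Fintype.card_pos_iff.2 ⟨r⟩
  refine ⟨(↑) '' (F : Set G.edgeSet), ⟨by simp, ?_⟩, ?_⟩
  · have hes : (fromEdgeSet ((↑) '' (F : Set G.edgeSet) : Set (Sym2 V))).edgeSet =
        (↑) '' (F : Set G.edgeSet) := by
      rw [edgeSet_fromEdgeSet, sdiff_eq_left, Set.disjoint_left]
      rintro _ ⟨e, -, rfl⟩
      exact G.not_isDiag_of_mem_edgeSet e.2
    have : Nonempty V := ⟨r⟩
    refine isTree_iff_connected_and_card.2 ⟨⟨fun a b ↦ hF a b (hconst a b)⟩, ?_⟩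
    rw [hes, Nat.card_image_of_injective Subtype.val_injective, Nat.card_eq_fintype_card]
    simpa using hcardF
  · obtain ⟨M, hM⟩ := (Set.finite_range w).bddAbove
    have hle := hw M fun e _ ↦ hM ⟨e, rfl⟩
    have hsum : ∑ e : G.edgeSet,
        w e * ((↑) '' (F : Set G.edgeSet) : Set (Sym2 V)).indicator 1 (e : Sym2 V) =
        ∑ e ∈ F, w e := by
      simp [Set.indicator_apply, sum_ite_mem]
    rw [hsum]
    simp only [sub_mul, sum_sub_distrib, ← mul_sum, h.sum_eq, sum_const, nsmul_eq_mul] at hle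
    have : (Fintype.card V : ℝ) = #F + 1 := by exact_mod_cast hcardF.symm
    rw [this] at hle
    linarith

theorem stp_eq_isRootedSplitting (hG : G.Connected) :
    stp G = {x | ∃ z, IsRootedSplitting G x z} := by
  apply subset_antisymm
  · refine convexHull_min ?_ (convex_isRootedSplitting G)
    rintro _ ⟨T, hT, rfl⟩
    exact exists_isRootedSplitting_of_isSpanningTree hT
  · rintro x ⟨z, h⟩
    by_contra hx
    have hfin : {x | ∃ T : Set (Sym2 V), IsSpanningTreeEdgeSet G T ∧
        x = fun e : G.edgeSet ↦ T.indicator (1 : Sym2 V → ℝ) (e : Sym2 V)}.Finite :=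
      (Set.finite_range fun (T : Set (Sym2 V)) (e : G.edgeSet) ↦
        T.indicator (1 : Sym2 V → ℝ) (e : Sym2 V)).subset
        fun _ ⟨T, _, hT⟩ ↦ ⟨T, hT.symm⟩
    obtain ⟨f, u, hfx, hf⟩ := geometric_hahn_banach_point_closed (convex_convexHull ℝ _)
      (hfin.isClosed_convexHull ℝ) hx
    have hfsum (y : G.edgeSet → ℝ) : f y = ∑ e, f (Pi.single e 1) * y e := by
      conv_lhs => rw [pi_eq_sum_univ' y, map_sum]
      simp [mul_comm]
    obtain ⟨T, hT, hle⟩ := h.exists_isSpanningTree_le hG fun e ↦ f (Pi.single e 1)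
    have := hf _ (subset_convexHull ℝ _ ⟨T, hT, rfl⟩)
    rw [hfsum] at this hfx
    linarith

end Martin

/-- **Wong, Martin.** For every finite connected simple graph `G = (V, E)`,
the extension complexity of the spanning tree polytope of `G` is `O(|V| · |E|)`:
there is a universal constant `C > 0` such that `xc(STP(G)) ≤ C · |V| · |E|`
for every finite connected simple graph `G`. -/
theorem xc_stp_le_card_mul_card :
    ∃ C : ℝ, 0 < C ∧
      ∀ (V : Type) [Fintype V] [DecidableEq V] (G : SimpleGraph V) [DecidableRel G.Adj],
        G.Connected →
        (xc (stp G) : ℝ) ≤ C * (Fintype.card V : ℝ) * (G.edgeFinset.card : ℝ) := by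
  refine ⟨2, two_pos, fun V _ _ G _ hG ↦ ?_⟩
  have h := xc_le_of_isExtFormulation (isExtFormulation_isRootedSplitting G)
  rw [← stp_eq_isRootedSplitting hG, Fintype.card_prod, dart_card_eq_twice_card_edges] at h
  calc
    (xc (stp G) : ℝ) ≤ (Fintype.card V * (2 * #G.edgeFinset) : ℕ) := by exact_mod_cast h
    _ = 2 * (Fintype.card V : ℝ) * (#G.edgeFinset : ℝ) := by
      push_cast
      ring
end

section
/- Let G = (V,E) be a finite connected simple graph and suppose X ⊆ V is a set of at most k ≥ 1 vertices such that xc(NESUBP(G−X)) ≤ C·|E| for some constant C. Then xc(STP(G)) ≤ xc(NESUBP(G−X)) + c·k·|E| for a universal constant c, and in particular xc(STP(G)) = O((C + k)·|E|). -/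
/-- The point `(χ^S, χ^F) ∈ ℝ^V × ℝ^E` (identified with `ℝ^(V ⊕ E)`). -/
noncomputable def charVec {V : Type} (G : SimpleGraph V) (S : Set V) (F : Set (Sym2 V)) :
    V ⊕ ↥G.edgeSet → ℝ :=
  Sum.elim (S.indicator 1) (fun e => F.indicator 1 (e : Sym2 V))

/-- The subgraph polytope of `G`:
`conv{(χ^S, χ^F) | S ⊆ V, F ⊆ E(S)}`, where `E(S)` is the set of edges of `G`
with both endpoints in `S`. -/
noncomputable def subp {V : Type} (G : SimpleGraph V) : Set (V ⊕ ↥G.edgeSet → ℝ) :=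
  convexHull ℝ {z | ∃ (S : Set V) (F : Set (Sym2 V)),
    F ⊆ G.edgeSet ∧ (∀ e ∈ F, ∀ w ∈ e, w ∈ S) ∧ z = charVec G S F}

/-- The non-empty subgraph polytope of `G`:
`conv{(χ^S, χ^F) | ∅ ⊊ S ⊆ V, F ⊆ E(S)}`. -/
noncomputable def nesubp {V : Type} (G : SimpleGraph V) : Set (V ⊕ ↥G.edgeSet → ℝ) :=
  convexHull ℝ {z | ∃ (S : Set V) (F : Set (Sym2 V)), S.Nonempty ∧
    F ⊆ G.edgeSet ∧ (∀ e ∈ F, ∀ w ∈ e, w ∈ S) ∧ z = charVec G S F}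

/-- The non-empty subgraph polytope of `G − X`, canonically embedded in
`ℝ^V × ℝ^E` by setting all coordinates indexed by vertices of `X` and by edges
incident to `X` equal to `0`: it is the convex hull of the points `(χ^S, χ^F)`
with `∅ ⊊ S ⊆ V ∖ X` and `F ⊆ E(S)` (edges of `G` with both endpoints in `S`,
which are exactly the edges of `G − X` with both endpoints in `S`). -/
noncomputable def nesubpDel {V : Type} (G : SimpleGraph V) (X : Set V) :
    Set (V ⊕ ↥G.edgeSet → ℝ) :=
  convexHull ℝ {z | ∃ (S : Set V) (F : Set (Sym2 V)), S.Nonempty ∧ Disjoint S X ∧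
    F ⊆ G.edgeSet ∧ (∀ e ∈ F, ∀ w ∈ e, w ∈ S) ∧ z = charVec G S F}

/-- A coordinate-free version of `IsExtFormulation`: `P` is the projection of a polyhedron cut out
by `m` affine inequalities and a linear equation with values in a finite-dimensional space. -/
def HasExtension {ι : Type} [Fintype ι] (P : Set (ι → ℝ)) (m : ℕ) : Prop :=
  ∃ (I Y Z : Type) (_ : Fintype I) (_ : AddCommGroup Y) (_ : Module ℝ Y)
    (_ : FiniteDimensional ℝ Y) (_ : AddCommGroup Z) (_ : Module ℝ Z) (_ : FiniteDimensional ℝ Z)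
    (f : I → (ι → ℝ) × Y →ₗ[ℝ] ℝ) (b : I → ℝ) (g : (ι → ℝ) × Y →ₗ[ℝ] Z) (c : Z),
    Fintype.card I = m ∧ P = {x | ∃ y : Y, (∀ i, f i (x, y) ≤ b i) ∧ g (x, y) = c}

section Extension

variable {ι : Type} [Fintype ι] {P Q : Set (ι → ℝ)} {m n : ℕ}

theorem IsExtFormulation.hasExtension (h : IsExtFormulation P m) : HasExtension P m := by
  obtain ⟨k, p, A, B, b, C, D, c, rfl⟩ := h
  refine ⟨Fin m, Fin k → ℝ, Fin p → ℝ, inferInstance, inferInstance, inferInstance, inferInstance,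
    inferInstance, inferInstance, inferInstance,
    fun i => LinearMap.proj i ∘ₗ A.mulVecLin.coprod B.mulVecLin, b,
    C.mulVecLin.coprod D.mulVecLin, c, by simp, ?_⟩
  ext x
  simp [funext_iff]

theorem HasExtension.isExtFormulation (h : HasExtension P m) : IsExtFormulation P m := by
  classical
  obtain ⟨I, Y, Z, _, _, _, _, _, _, _, f, b, g, c, hm, rfl⟩ := h
  let eI : Fin m ≃ I := (finCongr hm.symm).trans (Fintype.equivFin I).symm
  let eY := (Module.finBasis ℝ Y).equivFun
  let eZ := (Module.finBasis ℝ Z).equivFun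
  let F : (ι → ℝ) × Y →ₗ[ℝ] Fin m → ℝ := LinearMap.pi fun i => f (eI i)
  have split : ∀ x y, (x, y) = ((x, 0) : (ι → ℝ) × Y) + (0, y) := fun x y => by simp
  refine ⟨_, _, LinearMap.toMatrix' (F ∘ₗ LinearMap.inl ℝ _ _),
    LinearMap.toMatrix' (F ∘ₗ LinearMap.inr ℝ _ _ ∘ₗ eY.symm.toLinearMap), fun i => b (eI i),
    LinearMap.toMatrix' (eZ.toLinearMap ∘ₗ g ∘ₗ LinearMap.inl ℝ _ _),
    LinearMap.toMatrix' (eZ.toLinearMap ∘ₗ g ∘ₗ LinearMap.inr ℝ _ _ ∘ₗ eY.symm.toLinearMap),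
    eZ c, ?_⟩
  ext x
  simp only [Set.mem_ofPred_eq, LinearMap.toMatrix'_mulVec]
  rw [← eY.symm.toEquiv.exists_congr_right]
  refine exists_congr fun y => and_congr ?_ ?_
  · rw [← eI.forall_congr_right]
    refine forall_congr' fun i => ?_
    rw [split, map_add]
    rfl
  · rw [← eZ.injective.eq_iff, funext_iff]
    refine forall_congr' fun i => ?_
    rw [split, map_add, map_add]
    rfl

theorem HasExtension.xc_le (h : HasExtension P m) : xc P ≤ m :=
  Nat.sInf_le h.isExtFormulation

theorem HasExtension.hasExtension_xc (h : HasExtension P m) : HasExtension P (xc P) :=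
  IsExtFormulation.hasExtension (Nat.sInf_mem (s := {m | IsExtFormulation P m})
    ⟨m, h.isExtFormulation⟩)

theorem HasExtension.convex (h : HasExtension P m) : Convex ℝ P := by
  obtain ⟨I, Y, Z, _, _, _, _, _, _, _, f, b, g, c, hm, rfl⟩ := h
  rintro x ⟨y, hy, hy'⟩ x' ⟨z, hz, hz'⟩ s t hs ht hst
  have e : (s • x + t • x', s • y + t • z) = s • (x, y) + t • (x', z) := rfl
  refine ⟨s • y + t • z, fun i => ?_, ?_⟩
  · rw [e, map_add, map_smul, map_smul, smul_eq_mul, smul_eq_mul]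
    calc _ ≤ s * b i + t * b i := by gcongr <;> apply_assumption
      _ = b i := by rw [← add_mul, hst, one_mul]
  · rw [e, map_add, map_smul, map_smul, hy', hz', ← add_smul, hst, one_smul]

theorem HasExtension.inter (hP : HasExtension P m) (hQ : HasExtension Q n) :
    HasExtension (P ∩ Q) (m + n) := by
  obtain ⟨I, Y, Z, _, _, _, _, _, _, _, f, b, g, c, rfl, rfl⟩ := hP
  obtain ⟨I', Y', Z', _, _, _, _, _, _, _, f', b', g', c', rfl, rfl⟩ := hQ
  let π : (ι → ℝ) × (Y × Y') →ₗ[ℝ] (ι → ℝ) × Y :=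
    LinearMap.prodMap LinearMap.id (LinearMap.fst ℝ Y Y')
  let π' : (ι → ℝ) × (Y × Y') →ₗ[ℝ] (ι → ℝ) × Y' :=
    LinearMap.prodMap LinearMap.id (LinearMap.snd ℝ Y Y')
  refine ⟨I ⊕ I', Y × Y', Z × Z', inferInstance, inferInstance, inferInstance, inferInstance,
    inferInstance, inferInstance, inferInstance,
    Sum.elim (fun i => f i ∘ₗ π) (fun i => f' i ∘ₗ π'), Sum.elim b b',
    (g ∘ₗ π).prod (g' ∘ₗ π'), (c, c'), by simp, ?_⟩
  ext x
  simp only [Set.mem_inter_iff, Set.mem_ofPred_eq, Sum.forall, Sum.elim_inl, Sum.elim_inr,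
    LinearMap.comp_apply, LinearMap.prod_apply, Function.prod, Prod.mk.injEq, Prod.exists]
  constructor
  · rintro ⟨⟨y, h1, h2⟩, y', h3, h4⟩
    exact ⟨y, y', ⟨h1, h3⟩, h2, h4⟩
  · rintro ⟨y, y', ⟨h1, h3⟩, h2, h4⟩
    exact ⟨⟨y, h1, h2⟩, y', h3, h4⟩

theorem hasExtension_linear_eq {Z : Type} [AddCommGroup Z] [Module ℝ Z] [FiniteDimensional ℝ Z]
    (g : (ι → ℝ) →ₗ[ℝ] Z) (c : Z) : HasExtension {x | g x = c} 0 :=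
  ⟨Empty, Unit → ℝ, Z, inferInstance, inferInstance, inferInstance, inferInstance, inferInstance,
    inferInstance, inferInstance, Empty.elim, Empty.elim, g ∘ₗ LinearMap.fst ℝ _ _, c,
    by simp, by ext; simp⟩

theorem hasExtension_univ : HasExtension (Set.univ : Set (ι → ℝ)) 0 := by
  simpa using hasExtension_linear_eq (0 : (ι → ℝ) →ₗ[ℝ] ℝ) 0

theorem hasExtension_empty : HasExtension (∅ : Set (ι → ℝ)) 0 := by
  simpa using hasExtension_linear_eq (0 : (ι → ℝ) →ₗ[ℝ] ℝ) 1

theorem hasExtension_of_isEmpty [IsEmpty ι] (P : Set (ι → ℝ)) : HasExtension P 0 := by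
  rcases Set.eq_empty_or_nonempty P with rfl | h
  · exact hasExtension_empty
  · rw [Set.Nonempty.eq_univ h]
    exact hasExtension_univ

theorem hasExtension_nonneg : HasExtension {x : ι → ℝ | ∀ i, 0 ≤ x i} (Fintype.card ι) :=
  ⟨ι, Unit → ℝ, ℝ, inferInstance, inferInstance, inferInstance, inferInstance, inferInstance,
    inferInstance, inferInstance, fun i => -(LinearMap.proj i ∘ₗ LinearMap.fst ℝ _ _), 0, 0, 0,
    by simp, by ext; simp⟩

theorem HasExtension.biInter {α : Type} (X : Finset α) (P : α → Set (ι → ℝ))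
    (h : ∀ a ∈ X, HasExtension (P a) m) :
    HasExtension {x | ∀ a ∈ X, x ∈ P a} (X.card * m) := by
  classical
  induction X using Finset.induction_on with
  | empty => simpa using hasExtension_univ
  | insert a s ha ih =>
    have := (h a (by simp)).inter (ih fun b hb => h b (by simp [hb]))
    rw [Finset.card_insert_of_notMem ha, add_mul, one_mul, add_comm]
    convert this using 1
    ext x
    simp

theorem Set.Finite.hasExtension_convexHull {s : Set (ι → ℝ)} (hs : s.Finite) :
    ∃ m, HasExtension (convexHull ℝ s) m := by
  classical
  have := hs.fintype
  let comb : (s → ℝ) →ₗ[ℝ] ι → ℝ := Fintype.linearCombination ℝ (fun v : s => (v : ι → ℝ))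
  let tot : (s → ℝ) →ₗ[ℝ] ℝ := Fintype.linearCombination ℝ (fun _ : s => (1 : ℝ))
  refine ⟨_, s, s → ℝ, (ι → ℝ) × ℝ, inferInstance, inferInstance, inferInstance, inferInstance,
    inferInstance, inferInstance, inferInstance,
    fun v => -(LinearMap.proj v ∘ₗ LinearMap.snd ℝ _ _), 0,
    (LinearMap.fst ℝ _ _ - comb ∘ₗ LinearMap.snd ℝ _ _).prod (tot ∘ₗ LinearMap.snd ℝ _ _), (0, 1),
    rfl, ?_⟩
  ext x
  have key := Finset.mem_convexHull' (R := ℝ) (s := s.toFinset) (x := x)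
  rw [Set.coe_toFinset] at key
  rw [key]
  simp only [Set.mem_ofPred_eq, LinearMap.neg_apply, LinearMap.comp_apply, LinearMap.snd_apply,
    LinearMap.proj_apply, Pi.zero_apply, neg_nonpos, LinearMap.prod_apply, Function.prod,
    LinearMap.sub_apply, LinearMap.fst_apply, Prod.mk.injEq, sub_eq_zero, comb, tot,
    Fintype.linearCombination_apply, smul_eq_mul, mul_one, Set.mem_toFinset]
  constructor
  · rintro ⟨w, h0, h1, h2⟩
    refine ⟨fun v => w v, fun v => h0 v v.2, ?_, ?_⟩
    · rw [← h2]
      exact (Finset.sum_subtype _ (by simp) fun v => w v • v)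
    · rw [← h1]
      exact (Finset.sum_subtype _ (by simp) fun v => w v).symm
  · rintro ⟨y, h0, h1, h2⟩
    have hw : ∀ v : s, (if h : (v : ι → ℝ) ∈ s then y ⟨v, h⟩ else 0) = y v := fun v => by simp
    refine ⟨fun v => if h : v ∈ s then y ⟨v, h⟩ else 0, fun v hv => by
      simpa [hv] using h0 ⟨v, hv⟩,
      ?_, ?_⟩
    · rw [Finset.sum_subtype (F := this) (p := (· ∈ s)) _ (by simp)]
      simp only [hw, h2]
    · rw [Finset.sum_subtype (F := this) (p := (· ∈ s)) _ (by simp), h1]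
      simp only [hw]

end Extension

section Farkas

variable {W : Type*} [AddCommGroup W] [Module ℝ W]

/-- **Farkas' lemma** for finitely many linear functionals. -/
theorem exists_nonneg_combination_of_forall_nonpos {I : Type*} (s : Finset I) (F : I → W →ₗ[ℝ] ℝ)
    (a : W →ₗ[ℝ] ℝ) (h : ∀ w, (∀ i ∈ s, F i w ≤ 0) → a w ≤ 0) :
    ∃ l : I → ℝ, (∀ i, 0 ≤ l i) ∧ a = ∑ i ∈ s, l i • F i := by
  classical
  induction s using Finset.induction_on generalizing F a with
  | empty =>
    refine ⟨0, by simp, LinearMap.ext fun w => ?_⟩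
    have h1 := h w (by simp)
    have h2 := h (-w) (by simp)
    rw [map_neg] at h2
    simp only [Finset.sum_empty, LinearMap.zero_apply]
    linarith
  | insert j s hj ih =>
    by_cases hs : ∀ w, (∀ i ∈ s, F i w ≤ 0) → a w ≤ 0
    · obtain ⟨l, hl, e⟩ := ih F a hs
      refine ⟨Function.update l j 0, fun i => ?_, ?_⟩
      · by_cases hi : i = j
        · simp [hi]
        · simpa [hi] using hl i
      · rw [Finset.sum_insert hj, e]
        simp only [Function.update_self, zero_smul, zero_add]
        refine Finset.sum_congr rfl fun i hi => ?_
        rw [Function.update_of_ne (ne_of_mem_of_not_mem hi hj)]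
    · push Not at hs
      obtain ⟨w, hw, haw⟩ := hs
      have hjw : 0 < F j w := by
        by_contra hc
        refine absurd (h w fun i hi => ?_) (not_le.2 haw)
        rcases Finset.mem_insert.1 hi with rfl | hi
        · exact not_lt.1 hc
        · exact hw i hi
      have key : ∀ v, (∀ i ∈ s, (F i - (F i w / F j w) • F j) v ≤ 0) →
          (a - (a w / F j w) • F j) v ≤ 0 := by
        intro v hv
        have := h (v - (F j v / F j w) • w) ?_
        · simp only [map_sub, map_smul, smul_eq_mul, LinearMap.sub_apply,
            LinearMap.smul_apply] at this ⊢
          convert this using 2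
          ring
        · intro i hi
          rcases Finset.mem_insert.1 hi with rfl | hi
          · simp [hjw.ne']
          · have := hv i hi
            simp only [map_sub, map_smul, smul_eq_mul, LinearMap.sub_apply,
              LinearMap.smul_apply] at this ⊢
            convert this using 2
            ring
      obtain ⟨l, hl, e⟩ := ih _ _ key
      refine ⟨Function.update l j (a w / F j w - ∑ i ∈ s, l i * (F i w / F j w)),
        fun i => ?_, ?_⟩
      · by_cases hi : i = j
        · subst hi
          rw [Function.update_self, sub_nonneg]
          refine (Finset.sum_nonpos fun k hk => ?_).trans (div_pos haw hjw).le
          exact mul_nonpos_of_nonneg_of_nonpos (hl k)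
            (div_nonpos_of_nonpos_of_nonneg (hw k hk) hjw.le)
        · simpa [hi] using hl i
      · rw [Finset.sum_insert hj, Function.update_self]
        have : ∑ i ∈ s, Function.update l j
            (a w / F j w - ∑ i ∈ s, l i * (F i w / F j w)) i • F i = ∑ i ∈ s, l i • F i :=
          Finset.sum_congr rfl fun i hi => by
            rw [Function.update_of_ne (ne_of_mem_of_not_mem hi hj)]
        rw [this]
        refine LinearMap.ext fun v => ?_
        have := LinearMap.congr_fun e v
        simp only [LinearMap.sub_apply, LinearMap.smul_apply, smul_eq_mul, LinearMap.sum_apply,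
          LinearMap.add_apply, mul_sub, sub_mul, Finset.sum_sub_distrib, Finset.sum_mul]
          at this ⊢
        simp only [← mul_assoc] at this ⊢
        linarith

theorem exists_nonneg_combination_of_forall_nonpos_of_eq_zero {I Z : Type*} [Fintype I]
    [AddCommGroup Z] [Module ℝ Z] (F : I → W →ₗ[ℝ] ℝ) (g : W →ₗ[ℝ] Z) (a : W →ₗ[ℝ] ℝ)
    (h : ∀ w, (∀ i, F i w ≤ 0) → g w = 0 → a w ≤ 0) :
    ∃ (l : I → ℝ) (μ : Z →ₗ[ℝ] ℝ), (∀ i, 0 ≤ l i) ∧ a = ∑ i, l i • F i + μ ∘ₗ g := by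
  obtain ⟨l, hl, e⟩ := exists_nonneg_combination_of_forall_nonpos Finset.univ
    (fun i => F i ∘ₗ (LinearMap.ker g).subtype) (a ∘ₗ (LinearMap.ker g).subtype)
    fun w hw => h w (fun i => hw i (Finset.mem_univ i)) w.2
  have : a - ∑ i, l i • F i ∈ LinearMap.range g.dualMap := by
    rw [LinearMap.range_dualMap_eq_dualAnnihilator_ker, Submodule.mem_dualAnnihilator]
    intro w hw
    have := LinearMap.congr_fun e ⟨w, hw⟩
    simp [LinearMap.sum_apply] at this
    simp [LinearMap.sum_apply, this]
  obtain ⟨μ, hμ⟩ := this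
  refine ⟨l, μ, hl, ?_⟩
  rw [eq_comm, sub_eq_iff_eq_add] at hμ
  rw [hμ, add_comm]
  rfl

/-- The affine version of **Farkas' lemma**. -/
theorem forall_le_iff_exists_multipliers {I Z : Type*} [Fintype I] [AddCommGroup Z] [Module ℝ Z]
    (f : I → W →ₗ[ℝ] ℝ) (b : I → ℝ) (g : W →ₗ[ℝ] Z) (c : Z)
    (hne : ∃ w, (∀ i, f i w ≤ b i) ∧ g w = c) (a : W →ₗ[ℝ] ℝ) (β : ℝ) :
    (∀ w, (∀ i, f i w ≤ b i) → g w = c → a w ≤ β) ↔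
      ∃ (l : I → ℝ) (μ : Z →ₗ[ℝ] ℝ), (∀ i, 0 ≤ l i) ∧ a = ∑ i, l i • f i + μ ∘ₗ g ∧
        ∑ i, l i * b i + μ c ≤ β := by
  constructor
  · intro h
    obtain ⟨w₀, hw₀, hg₀⟩ := hne
    let F : Option I → W × ℝ →ₗ[ℝ] ℝ := fun i => i.elim (-LinearMap.snd ℝ W ℝ) fun i =>
      f i ∘ₗ LinearMap.fst ℝ W ℝ - b i • LinearMap.snd ℝ W ℝ
    have key : ∀ w, (∀ i, F i w ≤ 0) →
        (g ∘ₗ LinearMap.fst ℝ W ℝ - (LinearMap.snd ℝ W ℝ).smulRight c) w = 0 →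
        (a ∘ₗ LinearMap.fst ℝ W ℝ - β • LinearMap.snd ℝ W ℝ) w ≤ 0 := by
      rintro ⟨w, t⟩ hw hg
      have ht := hw none
      have hf := fun i => hw (some i)
      simp [sub_eq_zero, F] at ht hf hg ⊢
      rcases ht.eq_or_lt with rfl | ht
      · simp only [mul_zero, zero_smul] at hf hg ⊢
        by_contra hc
        push Not at hc
        have key := h (w₀ + ((|β - a w₀| + 1) / a w) • w) (fun i => ?_) (by simp [hg, hg₀])
        · rw [map_add, map_smul, smul_eq_mul, div_mul_cancel₀ _ hc.ne'] at key
          have := le_abs_self (β - a w₀)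
          linarith
        · rw [map_add, map_smul, smul_eq_mul]
          have : (|β - a w₀| + 1) / a w * f i w ≤ 0 :=
            mul_nonpos_of_nonneg_of_nonpos (by positivity) (hf i)
          linarith [hw₀ i]
      · have key := h (t⁻¹ • w) (fun i => ?_) ?_
        · rwa [map_smul, smul_eq_mul, inv_mul_le_iff₀ ht, mul_comm] at key
        · rw [map_smul, smul_eq_mul, inv_mul_le_iff₀ ht, mul_comm]
          exact hf i
        · rw [map_smul, hg, smul_smul, inv_mul_cancel₀ ht.ne', one_smul]
    obtain ⟨l, μ, hl, e⟩ := exists_nonneg_combination_of_forall_nonpos_of_eq_zero _ _ _ key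
    refine ⟨fun i => l (some i), μ, fun i => hl _, LinearMap.ext fun w => ?_, ?_⟩
    · simpa [F, Fintype.sum_option, LinearMap.sum_apply] using LinearMap.congr_fun e (w, 0)
    · have := LinearMap.congr_fun e (0, 1)
      simp [F, Fintype.sum_option, LinearMap.sum_apply] at this
      have := hl none
      linarith
  · rintro ⟨l, μ, hl, rfl, h⟩ w hw rfl
    refine le_trans ?_ h
    simp only [LinearMap.add_apply, LinearMap.sum_apply, LinearMap.smul_apply, smul_eq_mul,
      LinearMap.comp_apply]
    gcongr with i
    · exact hl i
    · exact hw i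

end Farkas

/-- The set of all `x` for which the inequality `L x + q ≤ β` is valid on `Q` has
extension complexity at most one more than that of `Q`. -/
theorem HasExtension.valid_inequalities {ι α : Type} [Fintype ι] [Fintype α] {Q : Set (α → ℝ)}
    {m : ℕ} (hQ : HasExtension Q m) (L : (ι → ℝ) →ₗ[ℝ] (α → ℝ) →ₗ[ℝ] ℝ) (q : (α → ℝ) →ₗ[ℝ] ℝ)
    (β : ℝ) : ∃ n ≤ m + 1, HasExtension {x | ∀ z ∈ Q, L x z + q z ≤ β} n := by
  classical
  obtain ⟨I, Y, Z, _, _, _, _, _, _, _, f, b, g, c, hm, rfl⟩ := hQ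
  by_cases hne : ∃ w, (∀ i, f i w ≤ b i) ∧ g w = c
  swap
  · refine ⟨0, by simp, ?_⟩
    rw [Set.eq_univ_of_forall (s := {x | _})]
    · exact hasExtension_univ
    · rintro x z ⟨y, hy⟩
      exact absurd ⟨_, hy⟩ hne
  let comb : (I → ℝ) × (Z →ₗ[ℝ] ℝ) →ₗ[ℝ] (α → ℝ) × Y →ₗ[ℝ] ℝ :=
    (Fintype.linearCombination ℝ f).coprod g.dualMap
  let val : (I → ℝ) × (Z →ₗ[ℝ] ℝ) →ₗ[ℝ] ℝ :=
    (Fintype.linearCombination ℝ b).coprod (LinearMap.applyₗ c)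
  let π := LinearMap.fst ℝ (α → ℝ) Y
  refine ⟨m + 1, le_rfl, Option I, (I → ℝ) × (Z →ₗ[ℝ] ℝ), (α → ℝ) × Y →ₗ[ℝ] ℝ,
    inferInstance, inferInstance, inferInstance,
    inferInstance, inferInstance, inferInstance, inferInstance,
    fun i => i.elim (val ∘ₗ LinearMap.snd ℝ _ _) fun i =>
      -(LinearMap.proj i ∘ₗ LinearMap.fst ℝ _ _ ∘ₗ LinearMap.snd ℝ (ι → ℝ) ((I → ℝ) × (Z →ₗ[ℝ] ℝ))),
    fun i => i.elim β fun _ => 0,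
    comb ∘ₗ LinearMap.snd ℝ _ _ - π.dualMap ∘ₗ L ∘ₗ LinearMap.fst ℝ _ _, π.dualMap q,
    by simp [hm], ?_⟩
  ext x
  have := forall_le_iff_exists_multipliers f b g c hne ((L x + q) ∘ₗ π) β
  simp only [Set.mem_ofPred_eq]
  refine Iff.trans ?_ (this.trans ?_)
  · constructor
    · intro h w h1 h2
      exact h w.1 ⟨w.2, h1, h2⟩
    · rintro h z ⟨y, h1, h2⟩
      exact h (z, y) h1 h2
  · rw [Prod.exists]
    refine exists_congr fun l => exists_congr fun μ => ?_
    have e1 : (L x + q) ∘ₗ π = ∑ i, l i • f i + μ ∘ₗ g ↔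
        comb (l, μ) - π.dualMap (L x) = π.dualMap q := by
      rw [sub_eq_iff_eq_add, eq_comm, add_comm (π.dualMap q)]
      rfl
    rw [e1, Option.forall]
    simp only [Option.elim, LinearMap.neg_apply, LinearMap.comp_apply, LinearMap.snd_apply,
      LinearMap.fst_apply, LinearMap.proj_apply, neg_nonpos, LinearMap.sub_apply]
    have e2 : val (l, μ) = ∑ i, l i * b i + μ c := by
      simp only [val, LinearMap.coprod_apply, Fintype.linearCombination_apply]
      rfl
    rw [e2]
    tauto

namespace SimpleGraph

section Trees

variable {V : Type} {G : SimpleGraph V}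

/-- If `r` picks a root in each connected component, every non-root can be assigned an incident
edge, injectively. -/
theorem exists_parent (H : SimpleGraph V) (r : V → V) (hr : ∀ v, H.Reachable v (r v))
    (hadj : ∀ u v, H.Adj u v → r u = r v) :
    ∃ p : V → V, (∀ v, v ≠ r v → H.Adj v (p v)) ∧
      ∀ u v, u ≠ r u → v ≠ r v → s(u, p u) = s(v, p v) → u = v := by
  have step : ∀ v, ∃ w, v ≠ r v → H.Adj v w ∧ H.dist w (r v) < H.dist v (r v) := by
    intro v
    by_cases hv : v = r v
    · exact ⟨v, fun h => absurd hv h⟩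
    obtain ⟨q, hq⟩ := (hr v).exists_walk_length_eq_dist
    generalize r v = z at *
    cases q with
    | nil => exact absurd rfl hv
    | cons h q =>
      refine ⟨_, fun _ => ⟨h, ?_⟩⟩
      rw [← hq, Walk.length_cons]
      exact Nat.lt_succ_of_le (dist_le q)
  choose p hp using step
  refine ⟨p, fun v hv => (hp v hv).1, fun u v hu hv h => ?_⟩
  rcases Sym2.eq_iff.1 h with ⟨h, -⟩ | ⟨h1, h2⟩
  · exact h
  · have e := hadj _ _ (hp v hv).1
    rw [← h1] at e
    have a := (hp u hu).2
    have b := (hp v hv).2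
    rw [h2] at a
    rw [← h1, e] at b
    exact absurd a b.asymm

/-- The edges of `G` with both ends in `S`. -/
noncomputable def edgesIn (G : SimpleGraph V) [Fintype G.edgeSet] (S : Finset V) :
    Finset G.edgeSet :=
  open Classical in Finset.univ.filter fun e : G.edgeSet => ∀ w ∈ (e : Sym2 V), w ∈ S

theorem mem_edgesIn [Fintype G.edgeSet] {S : Finset V} {e : G.edgeSet} :
    e ∈ G.edgesIn S ↔ ∀ w ∈ (e : Sym2 V), w ∈ S := by
  simp [edgesIn]

/-- The vectors `x` that arise from distributing each edge weight to its two ends in such a way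
that `v` receives nothing and every other vertex receives exactly `1`. -/
def flowPolyhedron [Fintype V] [Fintype G.edgeSet] [DecidableEq V] [Fintype G.Dart] (v : V) :
    Set (G.edgeSet → ℝ) :=
  {x | ∃ f : G.Dart → ℝ, (∀ d, 0 ≤ f d) ∧
    (∀ e : G.edgeSet, ∑ d with d.edge = (e : Sym2 V), f d = x e) ∧
    ∀ u, ∑ d with d.snd = u, f d = if u = v then 0 else 1}

variable [Fintype V] [Fintype G.edgeSet] [DecidableEq V] [Fintype G.Dart]

theorem IsTree.exists_mem_edgeSet_parent {T : SimpleGraph V} (hT : T.IsTree) (v : V) {p : V → V}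
    (hp : ∀ u, u ≠ v → T.Adj u (p u))
    (hinj : ∀ u w, u ≠ v → w ≠ v → s(u, p u) = s(w, p w) → u = w)
    {e : Sym2 V} (he : e ∈ T.edgeSet) : ∃ u, u ≠ v ∧ s(u, p u) = e := by
  classical
  have hsub : (Finset.univ.erase v).image (fun u => s(u, p u)) ⊆ T.edgeFinset := by
    intro e he
    obtain ⟨u, hu, rfl⟩ := Finset.mem_image.1 he
    simpa using hp u (Finset.ne_of_mem_erase hu)
  have hcard : T.edgeFinset.card ≤ ((Finset.univ.erase v).image fun u => s(u, p u)).card := by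
    rw [Finset.card_image_of_injOn, Finset.card_erase_of_mem (Finset.mem_univ _),
      Finset.card_univ, ← hT.card_edgeFinset, Nat.add_sub_cancel]
    intro u hu w hw h
    exact hinj u w (by simpa using hu) (by simpa using hw) h
  have := Finset.eq_of_subset_of_card_le hsub hcard
  rw [← mem_edgeFinset, ← this] at he
  obtain ⟨u, hu, rfl⟩ := Finset.mem_image.1 he
  exact ⟨u, Finset.ne_of_mem_erase hu, rfl⟩

theorem IsTree.indicator_mem_flowPolyhedron {T : SimpleGraph V} (hT : T.IsTree) (hTG : T ≤ G)
    (v : V) : (fun e : G.edgeSet => T.edgeSet.indicator (1 : Sym2 V → ℝ) e) ∈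
      flowPolyhedron (G := G) v := by
  classical
  obtain ⟨p, hp, hinj⟩ := exists_parent T (fun _ => v) (fun u => hT.connected.preconnected u v)
    fun _ _ _ => rfl
  refine ⟨fun d => if d.snd ≠ v ∧ d.fst = p d.snd then 1 else 0, fun d => by
      dsimp only
      split_ifs <;> simp,
    fun e => ?_, fun u => ?_⟩
  · by_cases he : (e : Sym2 V) ∈ T.edgeSet
    · obtain ⟨u, hu, hue⟩ := hT.exists_mem_edgeSet_parent v hp hinj he
      dsimp only
      rw [Set.indicator_of_mem he, Finset.sum_eq_single ⟨(p u, u), hTG (hp u hu).symm⟩]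
      · simp [hu]
      · intro d hd hne
        rw [if_neg]
        rintro ⟨h1, h2⟩
        refine hne ?_
        have hd' : d.edge = (e : Sym2 V) := (Finset.mem_filter.1 hd).2
        have : s(d.snd, p d.snd) = s(u, p u) := by
          rw [hue, ← hd', ← h2, Sym2.eq_swap]
          rfl
        have := hinj _ _ h1 hu this
        refine Dart.ext _ _ (Prod.ext ?_ ?_)
        · simp [h2, this]
        · simp [this]
      · intro h
        refine absurd (Finset.mem_filter.2 ⟨Finset.mem_univ _, ?_⟩) h
        rw [← hue, Sym2.eq_swap]
        rfl
    · dsimp only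
      rw [Set.indicator_of_notMem he]
      refine Finset.sum_eq_zero fun d hd => if_neg ?_
      rintro ⟨h1, h2⟩
      refine he ?_
      rw [← (Finset.mem_filter.1 hd).2]
      change T.Adj d.fst d.snd
      rw [h2]
      exact (hp _ h1).symm
  · split_ifs with hu
    · refine Finset.sum_eq_zero fun d hd => if_neg fun h => h.1 ?_
      rw [(Finset.mem_filter.1 hd).2, hu]
    · rw [Finset.sum_eq_single ⟨(p u, u), hTG (hp u hu).symm⟩]
      · simp [hu]
      · intro d hd hne
        rw [if_neg]
        rintro ⟨h1, h2⟩
        have : d.snd = u := (Finset.mem_filter.1 hd).2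
        refine hne (Dart.ext _ _ (Prod.ext ?_ this))
        simp [h2, this]
      · intro h
        simp at h

theorem sum_le_of_mem_flowPolyhedron {v : V} {x : G.edgeSet → ℝ} (hx : x ∈ flowPolyhedron v)
    {S : Finset V} (hv : v ∈ S) :
    ∑ e ∈ G.edgesIn S, x e ≤ (S.card : ℝ) - 1 := by
  classical
  obtain ⟨f, hf, he, hu⟩ := hx
  calc ∑ e ∈ G.edgesIn S, x e
      = ∑ e ∈ G.edgesIn S,
          ∑ d with (⟨d.edge, d.edge_mem⟩ : G.edgeSet) = e, f d := by
        refine Finset.sum_congr rfl fun e _ => ?_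
        rw [← he e]
        simp only [Subtype.ext_iff]
    _ = ∑ d with ∀ w ∈ d.edge, w ∈ S, f d := by
        rw [← Finset.sum_fiberwise_of_maps_to (s := Finset.univ.filter fun d : G.Dart =>
          ∀ w ∈ d.edge, w ∈ S) (t := G.edgesIn S)
          (g := fun d : G.Dart => (⟨d.edge, d.edge_mem⟩ : G.edgeSet)) (by simp [edgesIn])]
        refine Finset.sum_congr rfl fun e he => Finset.sum_congr ?_ fun _ _ => rfl
        ext d
        simp only [Finset.mem_filter, Finset.mem_univ, true_and]
        refine ⟨?_, And.right⟩
        rintro rfl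
        exact ⟨mem_edgesIn.1 he, rfl⟩
    _ ≤ ∑ d with d.snd ∈ S, f d := by
        refine Finset.sum_le_sum_of_subset_of_nonneg (fun d hd => ?_) fun d _ _ => hf d
        simp only [Finset.mem_filter, Finset.mem_univ, true_and] at hd ⊢
        exact hd _ (Sym2.mem_mk_right _ _)
    _ = ∑ u ∈ S, ∑ d with d.snd = u, f d := by
        rw [← Finset.sum_fiberwise_of_maps_to (s := Finset.univ.filter fun d : G.Dart => d.snd ∈ S)
          (t := S) (g := fun d => d.snd) (by simp)]
        refine Finset.sum_congr rfl fun u hu => Finset.sum_congr ?_ fun _ _ => rfl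
        ext d
        simp only [Finset.mem_filter, Finset.mem_univ, true_and, and_iff_right_iff_imp]
        rintro rfl
        exact hu
    _ = (S.card : ℝ) - 1 := by
        simp only [hu]
        rw [← Finset.add_sum_erase _ _ hv, if_pos rfl, zero_add,
          Finset.sum_congr rfl fun u hu => if_neg (Finset.ne_of_mem_erase hu)]
        rw [Finset.sum_const, Finset.card_erase_of_mem hv, nsmul_eq_mul, mul_one,
          Nat.cast_sub (Finset.card_pos.2 ⟨v, hv⟩), Nat.cast_one]

theorem hasExtension_flowPolyhedron (v : V) :
    HasExtension (flowPolyhedron (G := G) v) (Fintype.card G.Dart) := by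
  let byEdge : (G.Dart → ℝ) →ₗ[ℝ] G.edgeSet → ℝ := LinearMap.pi fun e =>
    ∑ d with d.edge = (e : Sym2 V), LinearMap.proj d
  let bySnd : (G.Dart → ℝ) →ₗ[ℝ] V → ℝ := LinearMap.pi fun u =>
    ∑ d with d.snd = u, LinearMap.proj d
  refine ⟨G.Dart, G.Dart → ℝ, (G.edgeSet → ℝ) × (V → ℝ), inferInstance, inferInstance,
    inferInstance, inferInstance, inferInstance, inferInstance, inferInstance,
    fun d => -(LinearMap.proj d ∘ₗ LinearMap.snd ℝ _ _), 0,
    (byEdge ∘ₗ LinearMap.snd ℝ _ _ - LinearMap.fst ℝ _ _).prod (bySnd ∘ₗ LinearMap.snd ℝ _ _),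
    (0, fun u => if u = v then 0 else 1), rfl, ?_⟩
  ext x
  simp [flowPolyhedron, byEdge, bySnd, funext_iff, sub_eq_zero, LinearMap.sum_apply]

end Trees

end SimpleGraph

theorem sum_mul_nonpos_of_sum_threshold_nonpos {E : Type*} (s : Finset E) (w a : E → ℝ)
    (hw : ∀ e ∈ s, 0 ≤ w e) (h : ∀ t > 0, ∑ e ∈ s with t ≤ w e, a e ≤ 0) :
    ∑ e ∈ s, w e * a e ≤ 0 := by
  classical
  induction s using Finset.strongInduction generalizing w with
  | H s ih =>
    rcases s.eq_empty_or_nonempty with rfl | hs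
    · simp
    obtain ⟨e₀, he₀, hmin⟩ := s.exists_min_image w hs
    have h1 : w e₀ * ∑ e ∈ s, a e ≤ 0 := by
      rcases (hw e₀ he₀).eq_or_lt with h0 | h0
      · rw [← h0, zero_mul]
      · refine mul_nonpos_of_nonneg_of_nonpos h0.le ?_
        have := h _ h0
        rwa [Finset.filter_true_of_mem hmin] at this
    have h2 := ih (s.erase e₀) (Finset.erase_ssubset he₀) (fun e => w e - w e₀)
      (fun e he => sub_nonneg.2 (hmin e (Finset.mem_of_mem_erase he))) ?_
    · have h3 : ∑ e ∈ s, w e * a e = w e₀ * ∑ e ∈ s, a e + ∑ e ∈ s, (w e - w e₀) * a e := by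
        rw [Finset.mul_sum, ← Finset.sum_add_distrib]
        exact Finset.sum_congr rfl fun _ _ => by ring
      rw [← Finset.add_sum_erase s (fun e => (w e - w e₀) * a e) he₀, sub_self, zero_mul,
        zero_add] at h3
      linarith
    · intro t ht
      convert h (t + w e₀) (by linarith [hw e₀ he₀]) using 2
      ext e
      simp only [Finset.mem_filter, Finset.mem_erase, le_sub_iff_add_le]
      constructor
      · rintro ⟨⟨-, h1⟩, h2⟩
        exact ⟨h1, h2⟩
      · rintro ⟨h1, h2⟩
        refine ⟨⟨?_, h1⟩, h2⟩
        rintro rfl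
        linarith

namespace SimpleGraph

section Exchange

variable {V : Type} {G T : SimpleGraph V}

theorem IsTree.deleteEdges_sup_edge [Finite V] (hT : T.IsTree) {u v : V} (huv : u ≠ v)
    (hn : ¬T.Adj u v) {p : T.Walk u v} (hp : p.IsPath) {f : Sym2 V} (hf : f ∈ p.edges) :
    ((T ⊔ edge u v).deleteEdges {f}).IsTree := by
  have hadj : (T ⊔ edge u v).Adj v u := by simp [edge_adj, huv.symm]
  have hcyc : (Walk.cons hadj (p.mapLe le_sup_left)).IsCycle := by
    refine (Walk.cons_isCycle_iff _ _).2 ⟨hp.mapLe le_sup_left, fun h => hn ?_⟩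
    rw [Walk.edges_mapLe_eq_edges] at h
    exact (p.edges_subset_edgeSet h).symm
  have hbr : ¬(T ⊔ edge u v).IsBridge f := fun h => by
    refine h.notMem_edges_of_isCycle hcyc ?_
    rw [Walk.edges_cons, Walk.edges_mapLe_eq_edges]
    exact List.mem_cons_of_mem _ hf
  have hfT : f ∈ T.edgeSet := p.edges_subset_edgeSet hf
  rw [isTree_iff_connected_and_card]
  constructor
  · induction f with
    | _ x y =>
      exact (hT.connected.mono le_sup_left).connected_delete_edge_of_not_isBridge hbr
  · rw [← (isTree_iff_connected_and_card.1 hT).2, edgeSet_deleteEdges, edgeSet_sup,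
      edgeSet_edge_of_ne huv, Set.union_singleton, Nat.card_coe_set_eq, Nat.card_coe_set_eq,
      Set.ncard_sdiff_singleton_of_mem (Set.mem_insert_of_mem _ hfT),
      Set.ncard_insert_of_notMem (by simpa using hn), Nat.add_sub_cancel]

/-- The characteristic vector of the edges of `T` among the edges of `G`. -/
noncomputable def edgeIndicator (G T : SimpleGraph V) : G.edgeSet → ℝ :=
  fun e => T.edgeSet.indicator 1 (e : Sym2 V)

theorem edgeIndicator_nonneg (e : G.edgeSet) : 0 ≤ edgeIndicator G T e :=
  Set.indicator_nonneg (fun _ _ => zero_le_one) _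

theorem finite_edgeIndicator [Finite V] :
    {x | ∃ T ≤ G, T.IsTree ∧ x = edgeIndicator G T}.Finite :=
  (Set.finite_range (edgeIndicator G)).subset fun _ ⟨T, _, _, hx⟩ => ⟨T, hx.symm⟩

theorem stp_eq (G : SimpleGraph V) :
    stp G = convexHull ℝ {x | ∃ T ≤ G, T.IsTree ∧ x = edgeIndicator G T} := by
  refine congrArg _ (Set.ext fun x => ⟨?_, ?_⟩)
  · rintro ⟨T, ⟨hTG, hT⟩, rfl⟩
    have h : (fromEdgeSet T).edgeSet = T := by
      rw [edgeSet_fromEdgeSet, sdiff_eq_left, Set.disjoint_left]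
      exact fun e he => G.not_isDiag_of_mem_edgeSet (hTG he)
    refine ⟨fromEdgeSet T, edgeSet_subset_edgeSet.1 (h.symm ▸ hTG), hT, ?_⟩
    ext e
    rw [edgeIndicator, h]
  · rintro ⟨T, hTG, hT, rfl⟩
    exact ⟨T.edgeSet, ⟨edgeSet_subset_edgeSet.2 hTG, by rwa [fromEdgeSet_edgeSet]⟩, rfl⟩

variable [Fintype G.edgeSet]

theorem sum_mul_edgeIndicator_deleteEdges_sup_edge (w : Sym2 V → ℝ) (hTG : T ≤ G) {u v : V}
    (huv : G.Adj u v) (hn : ¬T.Adj u v) {f : Sym2 V} (hf : f ∈ T.edgeSet) :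
    ∑ e : G.edgeSet, w e * edgeIndicator G ((T ⊔ edge u v).deleteEdges {f}) e =
      ∑ e : G.edgeSet, w e * edgeIndicator G T e + w s(u, v) - w f := by
  classical
  have hi : ∀ g (hg : g ∈ G.edgeSet),
      ∑ e : G.edgeSet, w e * (if (e : Sym2 V) = g then 1 else 0) = w g := by
    intro g hg
    rw [Finset.sum_eq_single ⟨g, hg⟩]
    · simp
    · intro e _ he
      rw [if_neg fun h => he (Subtype.ext h), mul_zero]
    · simp
  rw [← hi s(u, v) huv, ← hi f (edgeSet_subset_edgeSet.2 hTG hf), ← Finset.sum_add_distrib,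
    ← Finset.sum_sub_distrib]
  refine Finset.sum_congr rfl fun e _ => ?_
  rw [← mul_add, ← mul_sub]
  congr 1
  have hfe : f ≠ s(u, v) := fun h => hn (by rwa [h] at hf)
  simp only [edgeIndicator, edgeSet_deleteEdges, edgeSet_sup, edgeSet_edge_of_ne huv.ne,
    Set.indicator_apply, Set.mem_sdiff, Set.mem_union, Set.mem_singleton_iff, Pi.one_apply]
  by_cases h1 : (e : Sym2 V) = s(u, v)
  · have : (e : Sym2 V) ∉ T.edgeSet := by rwa [h1]
    have h2 : (e : Sym2 V) ≠ f := fun h => hfe (h.symm.trans h1)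
    simp [h1, hfe.symm, hn]
  · by_cases h2 : (e : Sym2 V) = f
    · simp [h2, hf, hfe]
    · simp [h1, h2]

variable [Fintype V]

theorem IsTree.sum_edgeIndicator (hT : T.IsTree) (hTG : T ≤ G) :
    ∑ e, edgeIndicator G T e = (Fintype.card V : ℝ) - 1 := by
  classical
  rw [← hT.card_edgeFinset, Nat.cast_add, Nat.cast_one, add_sub_cancel_right]
  have h : T.edgeFinset = (Finset.univ.filter fun e : G.edgeSet => (e : Sym2 V) ∈ T.edgeSet).map
      (Function.Embedding.subtype _) := by
    ext e
    simpa using fun he => edgeSet_subset_edgeSet.2 hTG he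
  rw [h, Finset.card_map, Finset.natCast_card_filter]
  exact Finset.sum_congr rfl fun e _ => Set.indicator_apply _ _ _

theorem IsTree.reachable_threshold (hT : T.IsTree) (hTG : T ≤ G) (w : Sym2 V → ℝ)
    (hmax : ∀ T' ≤ G, T'.IsTree →
      ∑ e : G.edgeSet, w e * edgeIndicator G T' e ≤ ∑ e : G.edgeSet, w e * edgeIndicator G T e)
    {t : ℝ} {u v : V} (huv : G.Adj u v) (ht : t ≤ w s(u, v)) :
    (fromEdgeSet {e | e ∈ T.edgeSet ∧ t ≤ w e}).Reachable u v := by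
  by_cases hn : T.Adj u v
  · exact Adj.reachable ((fromEdgeSet_adj _).2 ⟨⟨hn, ht⟩, huv.ne⟩)
  obtain ⟨p, hp⟩ := (hT.connected.preconnected u v).exists_isPath
  refine ⟨p.transfer _ fun f hf => ?_⟩
  have hfT := p.edges_subset_edgeSet hf
  rw [edgeSet_fromEdgeSet]
  refine ⟨⟨hfT, ?_⟩, T.not_isDiag_of_mem_edgeSet hfT⟩
  by_contra! hlt
  have := hmax _ ?_ (hT.deleteEdges_sup_edge huv.ne hn hp hf)
  · rw [sum_mul_edgeIndicator_deleteEdges_sup_edge w hTG huv hn hfT] at this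
    linarith
  · exact (deleteEdges_le _).trans (sup_le hTG (by rwa [edge_le_iff, or_iff_right huv.ne]))

theorem IsTree.sum_threshold_le (hT : T.IsTree) (hTG : T ≤ G) (w : Sym2 V → ℝ)
    (hmax : ∀ T' ≤ G, T'.IsTree →
      ∑ e : G.edgeSet, w e * edgeIndicator G T' e ≤ ∑ e : G.edgeSet, w e * edgeIndicator G T e)
    {x : G.edgeSet → ℝ} (hx : ∀ e, 0 ≤ x e)
    (hS : ∀ S : Finset V, S.Nonempty → ∑ e ∈ G.edgesIn S, x e ≤ (S.card : ℝ) - 1) (t : ℝ) :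
    ∑ e ∈ Finset.univ.filter (fun e : G.edgeSet => t ≤ w e), x e ≤
      ∑ e ∈ Finset.univ.filter (fun e : G.edgeSet => t ≤ w e), edgeIndicator G T e := by
  classical
  set F := fromEdgeSet {e | e ∈ T.edgeSet ∧ t ≤ w e} with hF
  let r : V → V := fun v => (F.connectedComponentMk v).out
  have hr : ∀ v, F.Reachable v (r v) := fun v =>
    (ConnectedComponent.exact (F.connectedComponentMk v).out_eq).symm
  have hrr : ∀ u v, F.Reachable u v → r u = r v := fun u v h => by
    simp only [r, ConnectedComponent.sound h]
  obtain ⟨p, hp, hinj⟩ := exists_parent F r hr fun u v h => hrr u v h.reachable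
  have hcard : (Finset.univ.filter fun u => r u ≠ u).card ≤
      ((Finset.univ.filter fun e : G.edgeSet => t ≤ w e).filter
        fun e : G.edgeSet => (e : Sym2 V) ∈ T.edgeSet).card := by
    rw [← Finset.card_map (Function.Embedding.subtype _)]
    refine Finset.card_le_card_of_injOn (fun u => s(u, p u)) (fun u hu => ?_) fun u hu v hv h => ?_
    · have h := ((fromEdgeSet_adj _).1 (hp u (Finset.mem_filter.1 hu).2.symm)).1
      simp only [Finset.coe_map, Set.mem_image, Finset.mem_coe, Finset.mem_filter,
        Finset.mem_univ, true_and]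
      exact ⟨⟨_, edgeSet_subset_edgeSet.2 hTG h.1⟩, ⟨h.2, h.1⟩, rfl⟩
    · exact hinj u v (Finset.mem_filter.1 hu).2.symm (Finset.mem_filter.1 hv).2.symm h
  have hsum : ∑ e ∈ Finset.univ.filter (fun e : G.edgeSet => t ≤ w e), edgeIndicator G T e =
      (((Finset.univ.filter fun e : G.edgeSet => t ≤ w e).filter
        fun e : G.edgeSet => (e : Sym2 V) ∈ T.edgeSet).card : ℝ) := by
    rw [Finset.natCast_card_filter]
    exact Finset.sum_congr rfl fun e _ => Set.indicator_apply _ _ _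
  rw [hsum]
  refine le_trans ?_ (Nat.cast_le.2 hcard)
  have hdisj : ((Finset.univ.filter fun u => r u = u : Finset V) : Set V).PairwiseDisjoint
      fun ρ => G.edgesIn (Finset.univ.filter fun u => r u = ρ) := by
    intro ρ _ σ _ hne
    refine Finset.disjoint_left.2 fun e h1 h2 => hne ?_
    have h1 := (Finset.mem_filter.1 (mem_edgesIn.1 h1 _ (Sym2.out_fst_mem _))).2
    have h2 := (Finset.mem_filter.1 (mem_edgesIn.1 h2 _ (Sym2.out_fst_mem _))).2
    exact h1.symm.trans h2
  have hrid : ∀ u, r (r u) = r u := fun u => (hrr _ _ (hr u)).symm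
  calc ∑ e ∈ Finset.univ.filter (fun e : G.edgeSet => t ≤ w e), x e
      ≤ ∑ e ∈ (Finset.univ.filter fun u => r u = u).biUnion
          fun ρ => G.edgesIn (Finset.univ.filter fun u => r u = ρ), x e := by
        refine Finset.sum_le_sum_of_subset_of_nonneg (fun e he => ?_) fun e _ _ => hx e
        obtain ⟨e, heG⟩ := e
        induction e with
        | _ u v =>
          have h := hrr _ _ (hT.reachable_threshold hTG w hmax heG (Finset.mem_filter.1 he).2)
          refine Finset.mem_biUnion.2 ⟨r u, by simp [hrid], mem_edgesIn.2 ?_⟩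
          simp [h]
    _ = ∑ ρ with r ρ = ρ, ∑ e ∈ G.edgesIn (Finset.univ.filter fun u => r u = ρ), x e :=
        Finset.sum_biUnion hdisj
    _ ≤ ∑ ρ with r ρ = ρ, (((Finset.univ.filter fun u => r u = ρ).card : ℝ) - 1) := by
        refine Finset.sum_le_sum fun ρ hρ => hS _ ⟨ρ, ?_⟩
        simpa using hρ
    _ = ((Finset.univ.filter fun u => r u ≠ u).card : ℝ) := by
        have h := Finset.card_eq_sum_card_fiberwise (f := r) (s := Finset.univ)
          (t := Finset.univ.filter fun u => r u = u) fun u _ => by simp [hrid]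
        rw [Finset.sum_sub_distrib, ← Nat.cast_sum, ← h,
          ← Finset.card_filter_add_card_filter_not (s := Finset.univ) fun u => r u = u]
        simp

/-- Edmonds' description of the spanning tree polytope. -/
theorem Connected.mem_stp (hG : G.Connected) {x : G.edgeSet → ℝ} (hx : ∀ e, 0 ≤ x e)
    (htotal : ∑ e, x e = (Fintype.card V : ℝ) - 1)
    (hS : ∀ S : Finset V, S.Nonempty → ∑ e ∈ G.edgesIn S, x e ≤ (S.card : ℝ) - 1) :
    x ∈ stp G := by
  classical
  rw [stp_eq]
  by_contra hmem
  obtain ⟨φ, c, h1, h2⟩ := geometric_hahn_banach_closed_point (convex_convexHull ℝ _)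
    (finite_edgeIndicator.isClosed_convexHull ℝ) hmem
  obtain ⟨T, ⟨hTG, hT⟩, hmax⟩ := Set.exists_max_image {T | T ≤ G ∧ T.IsTree}
    (fun T => φ (edgeIndicator G T)) (Set.toFinite _) hG.exists_isTree_le
  refine (((h1 _ (subset_convexHull ℝ _ ⟨T, hTG, hT, rfl⟩)).trans h2).not_ge ?_)
  obtain ⟨w, hw⟩ : ∃ w : Sym2 V → ℝ, ∀ y, φ y = ∑ e : G.edgeSet, w e * y e := by
    refine ⟨Function.extend Subtype.val (fun e => φ (Pi.single e 1)) 0, fun y => ?_⟩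
    conv_lhs => rw [pi_eq_sum_univ' y]
    simp only [map_sum, map_smul, smul_eq_mul, Subtype.val_injective.extend_apply]
    refine Finset.sum_congr rfl fun e _ => ?_
    rw [mul_comm]
  have hthr := hT.sum_threshold_le hTG w (fun T' hT'G hT' => by
    rw [← hw, ← hw]
    exact hmax T' ⟨hT'G, hT'⟩) hx hS
  obtain ⟨m, hm⟩ : ∃ m, ∀ e : G.edgeSet, m ≤ w e := by
    obtain ⟨m, hm⟩ := (Set.finite_range fun e : G.edgeSet => w e).bddBelow
    exact ⟨m, fun e => hm ⟨e, rfl⟩⟩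
  have key := sum_mul_nonpos_of_sum_threshold_nonpos Finset.univ
    (fun e : G.edgeSet => w e - m) (fun e => x e - edgeIndicator G T e)
    (fun e _ => sub_nonneg.2 (hm e)) fun t _ => by
      simp only [le_sub_iff_add_le]
      rw [Finset.sum_sub_distrib]
      exact sub_nonpos.2 (hthr _)
  have htree := hT.sum_edgeIndicator hTG
  have hexp : ∑ e : G.edgeSet, (w e - m) * (x e - edgeIndicator G T e) =
      (φ x - φ (edgeIndicator G T)) - m * (∑ e, x e - ∑ e, edgeIndicator G T e) := by
    rw [hw, hw, ← Finset.sum_sub_distrib, ← Finset.sum_sub_distrib, Finset.mul_sum,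
      ← Finset.sum_sub_distrib]
    exact Finset.sum_congr rfl fun _ _ => by ring
  rw [hexp, htotal, htree, sub_self, mul_zero, sub_zero] at key
  linarith

end Exchange

section Apex

variable {V : Type} [Fintype V] {G : SimpleGraph V}

/-- The points satisfying the spanning tree inequalities for the vertex sets disjoint from `X`,
phrased through the polytope `nesubpDel G X`. -/
def nesubpDelPolar (G : SimpleGraph V) [Fintype G.edgeSet] (X : Set V) : Set (G.edgeSet → ℝ) :=
  {x | ∀ z ∈ nesubpDel G X, ∑ e, x e * z (.inr e) + -∑ v, z (.inl v) ≤ -1}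

theorem finite_nesubpDel_generators (G : SimpleGraph V) (X : Set V) :
    {z | ∃ (S : Set V) (F : Set (Sym2 V)), S.Nonempty ∧ Disjoint S X ∧ F ⊆ G.edgeSet ∧
      (∀ e ∈ F, ∀ w ∈ e, w ∈ S) ∧ z = charVec G S F}.Finite :=
  (Set.finite_range fun p : Set V × Set (Sym2 V) => charVec G p.1 p.2).subset
    fun _ ⟨S, F, _, _, _, _, h⟩ => ⟨(S, F), h.symm⟩

variable [Fintype G.edgeSet]

theorem sum_edgesIn_le_of_mem_nesubpDelPolar {X : Set V} {x : G.edgeSet → ℝ}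
    (hx : x ∈ nesubpDelPolar G X) {S : Finset V} (hS : S.Nonempty) (hSX : Disjoint (S : Set V) X) :
    ∑ e ∈ G.edgesIn S, x e ≤ (S.card : ℝ) - 1 := by
  classical
  have h := hx _ (subset_convexHull ℝ _
    ⟨S, {e | e ∈ G.edgeSet ∧ ∀ w ∈ e, w ∈ S}, hS, hSX, fun e he => he.1, fun e he => he.2, rfl⟩)
  simp only [charVec, Sum.elim_inl, Sum.elim_inr, Set.indicator_apply, Finset.mem_coe,
    Set.mem_ofPred_eq, Subtype.coe_prop, true_and, Pi.one_apply, mul_ite, mul_one, mul_zero,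
    Finset.sum_boole, Finset.filter_univ_mem] at h
  have h' : ∑ e ∈ G.edgesIn S, x e =
      ∑ e : G.edgeSet, if ∀ w ∈ (e : Sym2 V), w ∈ S then x e else 0 := by
    rw [← Finset.sum_filter, edgesIn]
    congr!
  rw [h']
  linarith

theorem mem_nesubpDelPolar {X : Set V} {x : G.edgeSet → ℝ} (hx : ∀ e, 0 ≤ x e)
    (h : ∀ S : Finset V, S.Nonempty → ∑ e ∈ G.edgesIn S, x e ≤ (S.card : ℝ) - 1) :
    x ∈ nesubpDelPolar G X := by
  classical
  have hconv : Convex ℝ {z : V ⊕ G.edgeSet → ℝ |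
      ∑ e, x e * z (.inr e) + -∑ v, z (.inl v) ≤ -1} := by
    refine convex_halfSpace_le (f := fun z : V ⊕ G.edgeSet → ℝ =>
      ∑ e, x e * z (.inr e) + -∑ v, z (.inl v)) ⟨fun y z => ?_, fun c z => ?_⟩ _
    · simp [mul_add, Finset.sum_add_distrib]
      ring
    · simp [mul_add, Finset.mul_sum, mul_left_comm]
  refine fun z hz => convexHull_min ?_ hconv hz
  rintro _ ⟨S, F, hS, -, -, hFS, rfl⟩
  have h1 := h S.toFinset (by simpa using hS)
  have h2 : ∑ e : G.edgeSet, x e * charVec G S F (.inr e) ≤ ∑ e ∈ G.edgesIn S.toFinset, x e := by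
    rw [← Finset.sum_subset (Finset.subset_univ (G.edgesIn S.toFinset))]
    · refine Finset.sum_le_sum fun e _ => mul_le_of_le_one_right (hx e) ?_
      exact Set.indicator_le' (fun _ _ => le_rfl) (fun _ _ => zero_le_one) _
    · intro e _ he
      have : (e : Sym2 V) ∉ F := fun hF => he (mem_edgesIn.2 (by simpa using hFS _ hF))
      simp [charVec, this]
  have h3 : ∑ v, charVec G S F (.inl v) = (S.toFinset.card : ℝ) := by
    simp [charVec, Set.indicator_apply, Finset.sum_boole, Set.toFinset_card]
  rw [Set.mem_ofPred_eq, h3]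
  linarith

theorem hasExtension_nesubpDelPolar (X : Set V) :
    ∃ n ≤ xc (nesubpDel G X) + 1, HasExtension (nesubpDelPolar G X) n := by
  obtain ⟨m, hm⟩ := (finite_nesubpDel_generators G X).hasExtension_convexHull
  simpa [nesubpDelPolar, nesubpDel, LinearMap.sum_apply] using hm.hasExtension_xc.valid_inequalities
    (∑ e : G.edgeSet, (LinearMap.proj e : (G.edgeSet → ℝ) →ₗ[ℝ] ℝ).smulRight
      (LinearMap.proj (.inr e) : (V ⊕ G.edgeSet → ℝ) →ₗ[ℝ] ℝ))
    (-∑ v, LinearMap.proj (.inl v)) (-1)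

theorem Connected.hasExtension_stp [DecidableEq V] [Fintype G.Dart] (hG : G.Connected)
    (X : Finset V) : ∃ n ≤ xc (nesubpDel G (X : Set V)) + 1,
      HasExtension (stp G) (Fintype.card G.edgeSet + n + X.card * Fintype.card G.Dart) := by
  obtain ⟨n, hn, h⟩ := hasExtension_nesubpDelPolar (G := G) X
  have htotal := hasExtension_linear_eq
    (∑ e : G.edgeSet, (LinearMap.proj e : (G.edgeSet → ℝ) →ₗ[ℝ] ℝ)) ((Fintype.card V : ℝ) - 1)
  simp only [LinearMap.sum_apply, LinearMap.proj_apply] at htotal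
  have hext := ((hasExtension_nonneg.inter htotal).inter h).inter
    (HasExtension.biInter X _ fun v _ => hasExtension_flowPolyhedron (G := G) v)
  refine ⟨n, hn, ?_⟩
  rw [add_zero] at hext
  convert hext using 1
  refine Set.Subset.antisymm ?_ ?_
  · rw [stp_eq]
    refine convexHull_min ?_ hext.convex
    rintro _ ⟨T, hTG, hT, rfl⟩
    have hflow := hT.indicator_mem_flowPolyhedron hTG
    exact ⟨⟨⟨edgeIndicator_nonneg, hT.sum_edgeIndicator hTG⟩,
      mem_nesubpDelPolar edgeIndicator_nonneg fun S ⟨v, hv⟩ =>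
        sum_le_of_mem_flowPolyhedron (hflow v) hv⟩, fun v _ => hflow v⟩
  · rintro x ⟨⟨⟨hx, hsum⟩, hdel⟩, hflow⟩
    refine hG.mem_stp hx hsum fun S hS => ?_
    by_cases hSX : Disjoint S X
    · exact sum_edgesIn_le_of_mem_nesubpDelPolar hdel hS (Finset.disjoint_coe.2 hSX)
    · obtain ⟨v, hvS, hvX⟩ := Finset.not_disjoint_iff.1 hSX
      exact sum_le_of_mem_flowPolyhedron (hflow v hvX) hvS

end Apex

end SimpleGraph

/-- Let `G = (V, E)` be a finite connected simple graph and suppose `X ⊆ V` is a set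
of at most `k ≥ 1` vertices such that `xc(NESUBP(G−X)) ≤ C·|E|` for some constant `C`.
Then `xc(STP(G)) ≤ xc(NESUBP(G−X)) + c·k·|E|` for a universal constant `c`, and in
particular `xc(STP(G)) = O((C + k)·|E|)`. -/
theorem xc_stp_le_of_apex :
    ∃ c : ℝ, 0 < c ∧
      ∀ (V : Type) [Fintype V] [DecidableEq V] (G : SimpleGraph V) [DecidableRel G.Adj],
        G.Connected →
        ∀ (X : Finset V) (k : ℕ), 1 ≤ k → X.card ≤ k →
          ∀ C : ℝ, (xc (nesubpDel G (↑X : Set V)) : ℝ) ≤ C * (G.edgeFinset.card : ℝ) →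
            (xc (stp G) : ℝ) ≤
                (xc (nesubpDel G (↑X : Set V)) : ℝ) + c * k * (G.edgeFinset.card : ℝ) ∧
            (xc (stp G) : ℝ) ≤ c * (C + k) * (G.edgeFinset.card : ℝ) := by
  refine ⟨4, by norm_num, fun V _ _ G _ hG X k hk hX C hC => ?_⟩
  obtain ⟨n, hn, hext⟩ := hG.hasExtension_stp X
  have hle := hext.xc_le
  have hm : (0 : ℝ) ≤ xc (nesubpDel G (X : Set V)) := Nat.cast_nonneg _
  rw [SimpleGraph.dart_card_eq_twice_card_edges, ← SimpleGraph.edgeFinset_card] at hle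
  have hmain : (xc (stp G) : ℝ) ≤
      (xc (nesubpDel G (X : Set V)) : ℝ) + 4 * k * (G.edgeFinset.card : ℝ) := by
    rcases Nat.eq_zero_or_pos G.edgeFinset.card with h0 | hpos
    · have : IsEmpty G.edgeSet := by
        rw [← Fintype.card_eq_zero_iff, ← SimpleGraph.edgeFinset_card, h0]
      rw [Nat.le_zero.1 (hasExtension_of_isEmpty (stp G)).xc_le, h0]
      simp
    · have h1 : X.card * (2 * G.edgeFinset.card) ≤ k * (2 * G.edgeFinset.card) :=
        Nat.mul_le_mul_right _ hX
      have h2 : G.edgeFinset.card ≤ k * G.edgeFinset.card := Nat.le_mul_of_pos_left _ hk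
      have h3 : xc (stp G) ≤ xc (nesubpDel G (X : Set V)) + 4 * k * G.edgeFinset.card := by
        nlinarith
      exact_mod_cast h3
  refine ⟨hmain, hmain.trans ?_⟩
  nlinarith
end
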